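/- Let Σ be a signed graph and v a vertex of Σ. There is a positive circle of Σ containing v if and only if either v belongs to a balanced block that is not K_1 or K_2, or v belongs to an unbalanced block in which v is not a balancing vertex of degree 2. -/

import Mathlib

/-!
A theta subgraph has three circles, and the product of their signs is positive. If some negative
circle `C` of a block misses `v`, inseparability gives a path through `v` that meets `C` exactly in
its two distinct ends, and one of the two circles of the resulting theta that contain `v` is
positive. If instead `v` lies in every negative circle of the block, then the block minus `v` is
balanced, so after switching all its edges are positive and the sign of a circle through `v` is the
product `f x * f y` of the switched signs of its two edges `vx`, `vy` at `v`. With exactly two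
edges at `v` all circles through `v` have the same sign, whereas among three edges two have the
same sign and lie on a positive circle.
-/

/-- The sign of a walk in a signed graph: the product of the signs of its edges. -/
def walkSign {V : Type*} (G : SimpleGraph V) (σ : Sym2 V → ℤˣ) {u v : V}
    (w : G.Walk u v) : ℤˣ :=
  (w.edges.map σ).prod

/-- A set of vertices induces an inseparable subgraph: the induced subgraph is connected
and remains connected after deleting any one of its vertices (no cutpoint). -/
def inseparableOn {V : Type*} (G : SimpleGraph V) (S : Set V) : Prop :=
  (G.induce S).Connected ∧ ∀ v ∈ S, (G.induce (S \ {v})).Connected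

/-- `S` is (the vertex set of) a block of `G`: a maximal inseparable subgraph. -/
def isBlock {V : Type*} (G : SimpleGraph V) (S : Set V) : Prop :=
  inseparableOn G S ∧ ∀ T : Set V, S ⊆ T → inseparableOn G T → T = S

/-- The signed graph restricted to `S` (e.g. a block) is balanced: every circle lying
within `S` is positive. -/
def balancedOn {V : Type*} (G : SimpleGraph V) (σ : Sym2 V → ℤˣ) (S : Set V) : Prop :=
  ∀ ⦃a : V⦄ (w : G.Walk a a), w.IsCycle → (∀ x ∈ w.support, x ∈ S) →
    walkSign G σ w = 1

/-- `v` lies in a positive circle of the signed graph `(G, σ)`. -/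
def MemPositiveCircle {V : Type*} (G : SimpleGraph V) (σ : Sym2 V → ℤˣ) (v : V) : Prop :=
  ∃ (a : V) (w : G.Walk a a), w.IsCycle ∧ v ∈ w.support ∧ walkSign G σ w = 1

/-- `v` is a balancing vertex of the signed subgraph induced on `S`: it lies in every negative
circle within `S`. A balanced `S` is not excluded. -/
def IsBalancingVertex {V : Type*} (G : SimpleGraph V) (σ : Sym2 V → ℤˣ) (S : Set V) (v : V) :
    Prop :=
  ∀ ⦃a : V⦄ (w : G.Walk a a), w.IsCycle → (∀ x ∈ w.support, x ∈ S) →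
    walkSign G σ w = -1 → v ∈ w.support

/-- An ear of a vertex set `X`: a path with distinct ends in `X` and no other vertex in `X`. -/
structure IsEar {V : Type*} {G : SimpleGraph V} (X : Set V) {x y : V} (D : G.Walk x y) : Prop where
  isPath : D.IsPath
  ne : x ≠ y
  start_mem : x ∈ X
  end_mem : y ∈ X
  eq_or_eq : ∀ z ∈ D.support, z ∈ X → z = x ∨ z = y

section

open SimpleGraph

variable {V : Type*} {G : SimpleGraph V} {σ : Sym2 V → ℤˣ} {S T X : Set V} {u v w x y z : V}

section WalkSign

@[simp]
lemma walkSign_nil : walkSign G σ (Walk.nil : G.Walk u u) = 1 := rfl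

@[simp]
lemma walkSign_cons (h : G.Adj u v) (p : G.Walk v w) :
    walkSign G σ (Walk.cons h p) = σ s(u, v) * walkSign G σ p := by
  simp [walkSign]

@[simp]
lemma walkSign_append (p : G.Walk u v) (q : G.Walk v w) :
    walkSign G σ (p.append q) = walkSign G σ p * walkSign G σ q := by
  simp [walkSign]

@[simp]
lemma walkSign_reverse (p : G.Walk u v) : walkSign G σ p.reverse = walkSign G σ p := by
  simp [walkSign, List.prod_reverse]

@[simp]
lemma walkSign_rotate [DecidableEq V] (p : G.Walk v v) (h : u ∈ p.support) :
    walkSign G σ (p.rotate u h) = walkSign G σ p :=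
  ((p.rotate_edges u h).perm.map σ).prod_eq

lemma walkSign_cons_concat (hx : G.Adj v x) (hy : G.Adj v y) (q : G.Walk x y) :
    walkSign G σ (.cons hx (q.concat hy.symm)) =
      σ s(v, x) * walkSign G σ q * σ s(v, y) := by
  simp [Walk.concat_eq_append, Sym2.eq_swap (a := y), mul_assoc]

end WalkSign

section PathsAndCycles

lemma eq_of_mem_support_of_isPath {p : G.Walk u u} (hp : p.IsPath) (hz : z ∈ p.support) :
    z = u := by
  rwa [Walk.eq_nil_iff_nil.2 (Walk.isPath_iff_nil.1 hp), Walk.mem_support_nil_iff] at hz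

lemma one_lt_length_of_mem_support {p : G.Walk x y} (hv : v ∈ p.support) (hvx : v ≠ x)
    (hvy : v ≠ y) : 1 < p.length := by
  rcases p with _ | ⟨_, _ | ⟨_, p⟩⟩ <;> simp_all

lemma start_notMem_tail_support_of_isPath {p : G.Walk u v} (hp : p.IsPath) :
    u ∉ p.support.tail := by
  have hnodup := hp.support_nodup
  rw [← p.cons_tail_support] at hnodup
  exact (List.nodup_cons.1 hnodup).1

lemma isPath_append_iff (p : G.Walk u v) (q : G.Walk v w) :
    (p.append q).IsPath ↔ p.IsPath ∧ q.IsPath ∧ ∀ z ∈ p.support, z ∈ q.support → z = v := by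
  refine ⟨fun h => ⟨h.of_append_left, h.of_append_right, fun z hp hq => ?_⟩,
    fun ⟨hp, hq, hpq⟩ => ?_⟩
  · by_contra hz
    exact h.ne_of_mem_support_of_append hz hp hq rfl
  · rw [Walk.isPath_def, Walk.support_append, List.nodup_append']
    refine ⟨hp.support_nodup, hq.support_nodup.tail, fun z hzp hzq => ?_⟩
    obtain rfl := hpq z hzp (List.mem_of_mem_tail hzq)
    exact start_notMem_tail_support_of_isPath hq hzq

lemma isCycle_append_reverse {p q : G.Walk x y} (hp : p.IsPath) (hq : q.IsPath)
    (hpq : ∀ z ∈ p.support, z ∈ q.support → z = x ∨ z = y) (hlen : 1 < q.length) :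
    (p.append q.reverse).IsCycle := by
  refine hp.isCycle_append hq.reverse (fun z hzp hzq => ?_) (Or.inr (by simpa using hlen))
  have hzq' : z ∈ q.support := by simpa using List.mem_of_mem_tail hzq
  rcases hpq z (List.mem_of_mem_tail hzp) hzq' with rfl | rfl
  · exact start_notMem_tail_support_of_isPath hp hzp
  · exact start_notMem_tail_support_of_isPath hq.reverse hzq

lemma mem_support_cons_concat (hx : G.Adj v x) (hy : G.Adj v y) (q : G.Walk x y) :
    z ∈ (Walk.cons hx (q.concat hy.symm)).support ↔ z = v ∨ z ∈ q.support := by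
  simp only [Walk.support_cons, Walk.support_concat, List.mem_cons, List.mem_append,
    List.not_mem_nil, or_false]
  tauto

lemma isCycle_cons_concat (hx : G.Adj v x) (hy : G.Adj v y) (hxy : x ≠ y) {q : G.Walk x y}
    (hq : q.IsPath) (hv : v ∉ q.support) : (Walk.cons hx (q.concat hy.symm)).IsCycle := by
  rw [Walk.cons_isCycle_iff]
  refine ⟨hq.concat hv hy.symm, fun h => ?_⟩
  rw [Walk.edges_concat, List.concat_eq_append, List.mem_append, List.mem_singleton] at h
  rcases h with h | h
  · exact hv (q.fst_mem_support_of_mem_edges h)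
  · simp_all [Sym2.eq_swap (a := y)]

lemma exists_rotate_eq_cons_concat [DecidableEq V] {c : G.Walk u u} (hc : c.IsCycle)
    (hv : v ∈ c.support) :
    ∃ (x y : V) (hx : G.Adj v x) (hy : G.Adj v y) (q : G.Walk x y),
      x ≠ y ∧ v ∉ q.support ∧ c.rotate v hv = .cons hx (q.concat hy.symm) := by
  have hc' := hc.rotate hv
  generalize c.rotate v hv = c' at hc' ⊢
  rcases c' with _ | ⟨hx, _ | ⟨h, p⟩⟩
  · exact absurd hc' Walk.not_isCycle_nil
  · exact absurd rfl hx.ne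
  · obtain ⟨y, q, hy, hpq⟩ := Walk.exists_cons_eq_concat h p
    rw [hpq] at hc' ⊢
    obtain ⟨hpath, hedge⟩ := (Walk.cons_isCycle_iff _ _).1 hc'
    refine ⟨_, y, hx, hy.symm, q, ?_, ((Walk.concat_isPath_iff hy).1 hpath).2, rfl⟩
    rintro rfl
    simp [Walk.edges_concat, Sym2.eq_swap] at hedge

lemma exists_neighbors_of_isCycle {c : G.Walk u u} (hc : c.IsCycle) (hv : v ∈ c.support) :
    ∃ (x y : V) (hx : G.Adj v x) (hy : G.Adj v y) (q : G.Walk x y),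
      x ≠ y ∧ v ∉ q.support ∧ (∀ z, z ∈ c.support ↔ z = v ∨ z ∈ q.support) ∧
      ∀ σ : Sym2 V → ℤˣ, walkSign G σ c = walkSign G σ (.cons hx (q.concat hy.symm)) := by
  classical
  obtain ⟨x, y, hx, hy, q, hxy, hvq, hrot⟩ := exists_rotate_eq_cons_concat hc hv
  refine ⟨x, y, hx, hy, q, hxy, hvq, fun z => ?_, fun σ => ?_⟩
  · rw [← Walk.mem_support_rotate_iff c v hv, hrot, mem_support_cons_concat hx hy]
  · rw [← hrot, walkSign_rotate]

lemma exists_arcs_of_isCycle {c : G.Walk u u} (hc : c.IsCycle) (hx : x ∈ c.support)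
    (hy : y ∈ c.support) (hxy : x ≠ y) :
    ∃ A B : G.Walk x y, A.IsPath ∧ B.IsPath ∧ (∀ z ∈ A.support, z ∈ c.support) ∧
      (∀ z ∈ B.support, z ∈ c.support) ∧
      ∀ σ : Sym2 V → ℤˣ, walkSign G σ A * walkSign G σ B = walkSign G σ c := by
  classical
  have hc' := hc.rotate hx
  have hy' : y ∈ (c.rotate x hx).support := (Walk.mem_support_rotate_iff ..).2 hy
  have hspec := (c.rotate x hx).take_spec hy'
  have hsub : ∀ {z}, z ∈ (c.rotate x hx).support → z ∈ c.support :=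
    (Walk.mem_support_rotate_iff ..).1
  refine ⟨(c.rotate x hx).takeUntil y hy', ((c.rotate x hx).dropUntil y hy').reverse,
    hc'.isPath_takeUntil hy', ?_, fun z hz => ?_, fun z hz => ?_, fun σ => ?_⟩
  · rw [← hspec] at hc'
    exact (hc'.isPath_of_append_right (Walk.not_nil_of_ne hxy)).reverse
  · exact hsub (Walk.support_takeUntil_subset_support _ _ hz)
  · exact hsub (Walk.support_dropUntil_subset_support _ _ (by simpa using hz))
  · rw [walkSign_reverse, ← walkSign_append, hspec, walkSign_rotate]

end PathsAndCycles

section Connectivity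

lemma exists_path_of_connected_induce (hT : (G.induce T).Connected) (hx : x ∈ T) (hy : y ∈ T) :
    ∃ p : G.Walk x y, p.IsPath ∧ ∀ z ∈ p.support, z ∈ T := by
  classical
  obtain ⟨p⟩ := hT.preconnected ⟨x, hx⟩ ⟨y, hy⟩
  let q : G.Walk x y := p.map (Embedding.induce T).toHom
  have hq : q.support = p.support.map (Embedding.induce T).toHom := p.support_map _
  refine ⟨q.bypass, q.bypass_isPath, fun z hz => ?_⟩
  obtain ⟨z', -, rfl⟩ := List.mem_map.1 (hq ▸ q.support_bypass_subset_support hz)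
  exact z'.2

lemma exists_path_eq_of_mem (hT : (G.induce T).Connected) (hx : x ∈ T) (hy : y ∈ T)
    (hyX : y ∈ X) :
    ∃ z ∈ X, ∃ p : G.Walk x z, p.IsPath ∧ (∀ t ∈ p.support, t ∈ T) ∧
      ∀ t ∈ p.support, t ∈ X → t = z := by
  classical
  obtain ⟨p, hp, hpT⟩ := exists_path_of_connected_induce hT hx hy
  obtain ⟨z, hz, hzp, hfirst⟩ := p.exists_mem_support_forall_mem_support_imp_eq
    {t ∈ p.support.toFinset | t ∈ X} ⟨y, by simp [hyX]⟩
  have hsub := p.support_takeUntil_subset_support hzp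
  exact ⟨z, (Finset.mem_filter.1 hz).2, p.takeUntil z hzp, hp.takeUntil hzp,
    fun t ht => hpT t (hsub ht), fun t ht htX => hfirst t (by simp [hsub ht, htX]) ht⟩

lemma exists_adj_of_connected_induce (hT : (G.induce T).Connected) (hx : x ∈ T) (hy : y ∈ T)
    (hxy : x ≠ y) : ∃ z ∈ T, G.Adj x z := by
  obtain ⟨p, -, hp⟩ := exists_path_of_connected_induce hT hx hy
  exact ⟨p.snd, hp _ (p.getVert_mem_support 1), p.adj_snd (Walk.not_nil_of_ne hxy)⟩

end Connectivity

section Inseparable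

lemma inseparableOn_support_of_isCycle {c : G.Walk u u} (hc : c.IsCycle) :
    inseparableOn G {z | z ∈ c.support} := by
  refine ⟨c.connected_induce_support, fun v hv => ?_⟩
  obtain ⟨x, y, -, -, q, -, hvq, hsupp, -⟩ := exists_neighbors_of_isCycle hc hv
  have hdiff : {z | z ∈ c.support} \ {v} = {z | z ∈ q.support} := by
    ext z
    have : z ∈ q.support → z ≠ v := fun hz h => hvq (h ▸ hz)
    simp only [Set.mem_sdiff, Set.mem_ofPred_eq, Set.mem_singleton_iff, hsupp]
    tauto
  rw [hdiff]
  exact q.connected_induce_support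

lemma three_le_encard_of_isCycle {c : G.Walk u u} (hc : c.IsCycle) (hS : ∀ z ∈ c.support, z ∈ S) :
    3 ≤ S.encard := by
  obtain ⟨x, y, hx, hy, q, hxy, -, hsupp, -⟩ := exists_neighbors_of_isCycle hc c.start_mem_support
  have htriple : ({u, x, y} : Set V) ⊆ S := by
    rintro z (rfl | rfl | rfl) <;> exact hS _ ((hsupp _).2 (by simp))
  calc 3 = ({u, x, y} : Set V).encard :=
        (Set.encard_eq_three.2 ⟨u, x, y, hx.ne, hy.ne, hxy, rfl⟩).symm
    _ ≤ S.encard := Set.encard_le_encard htriple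

lemma connected_induce_sUnion_of_isChain {c : Set (Set V)} (hc : IsChain (· ⊆ ·) c)
    (hne : c.Nonempty) (hconn : ∀ s ∈ c, (G.induce s).Connected) :
    (G.induce (⋃₀ c)).Connected := by
  refine induce_sUnion_connected_of_pairwise_not_disjoint hne (fun {s t} hs ht => ?_)
    (fun hs => hconn _ hs)
  rcases hc.total hs ht with hst | hts
  · rw [Set.inter_eq_left.2 hst]
    exact Set.nonempty_coe_sort.1 (hconn s hs).nonempty
  · rw [Set.inter_eq_right.2 hts]
    exact Set.nonempty_coe_sort.1 (hconn t ht).nonempty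

lemma inseparableOn_sUnion_of_isChain {c : Set (Set V)} (hc : IsChain (· ⊆ ·) c)
    (hne : c.Nonempty) (hinsep : ∀ s ∈ c, inseparableOn G s) : inseparableOn G (⋃₀ c) := by
  refine ⟨connected_induce_sUnion_of_isChain hc hne fun s hs => (hinsep s hs).1, fun v _ => ?_⟩
  have hdiff : ⋃₀ c \ {v} = ⋃₀ ((· \ {v}) '' c) := by
    rw [Set.sUnion_image, Set.sUnion_eq_biUnion]
    simp only [Set.iUnion_sdiff]
  rw [hdiff]
  refine connected_induce_sUnion_of_isChain
    (IsChain.image_of_map_rel _ _ _ (fun _ _ h => Set.sdiff_subset_sdiff_left h) hc)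
    (hne.image _) (Set.forall_mem_image.2 fun s hs => ?_)
  by_cases hvs : v ∈ s
  · exact (hinsep s hs).2 v hvs
  · rw [Set.sdiff_singleton_eq_self hvs]
    exact (hinsep s hs).1

lemma inseparableOn.exists_isBlock (hT : inseparableOn G T) : ∃ S, isBlock G S ∧ T ⊆ S := by
  obtain ⟨S, hTS, hS⟩ := zorn_subset_nonempty {S | inseparableOn G S}
    (fun c hc hchain hne => ⟨⋃₀ c, inseparableOn_sUnion_of_isChain hchain hne hc,
      fun _ => Set.subset_sUnion_of_mem⟩) T hT
  exact ⟨S, ⟨hS.prop, fun _ hST hT' => (hS.eq_of_subset hT' hST).symm⟩, hTS⟩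

lemma inseparableOn.exists_neighbors (hS : inseparableOn G S) (hcard : 3 ≤ S.encard)
    (hv : v ∈ S) : ∃ x ∈ S, ∃ y ∈ S, G.Adj v x ∧ G.Adj v y ∧ x ≠ y := by
  have exists_third : ∀ x, ∃ z ∈ S, z ≠ v ∧ z ≠ x := by
    intro x
    by_contra! h
    have hpair : S ⊆ {v, x} := fun z hz => or_iff_not_imp_left.2 (h z hz)
    have hle : (3 : ℕ∞) ≤ 1 + 1 := calc
      3 ≤ S.encard := hcard
      _ ≤ ({v, x} : Set V).encard := Set.encard_le_encard hpair
      _ ≤ 1 + 1 := by simpa using Set.encard_insert_le {x} v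
    exact absurd hle (by decide)
  obtain ⟨z, hz, hzv, -⟩ := exists_third v
  obtain ⟨x, hx, hvx⟩ := exists_adj_of_connected_induce hS.1 hv hz hzv.symm
  obtain ⟨z', hz', hzv', hzx'⟩ := exists_third x
  obtain ⟨y, hy, hvy⟩ := exists_adj_of_connected_induce (hS.2 x hx) (x := v) ⟨hv, hvx.ne⟩
    ⟨hz', hzx'⟩ hzv'.symm
  exact ⟨x, hx, y, hy.1, hvx, hvy, fun h => hy.2 h.symm⟩

lemma exists_isCycle_cons_concat (hconn : (G.induce (S \ {v})).Connected) (hx : x ∈ S) (hy : y ∈ S)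
    (hvx : G.Adj v x) (hvy : G.Adj v y) (hxy : x ≠ y) :
    ∃ q : G.Walk x y, (∀ z ∈ q.support, z ∈ S \ {v}) ∧
      (Walk.cons hvx (q.concat hvy.symm)).IsCycle := by
  obtain ⟨q, hq, hqS⟩ := exists_path_of_connected_induce hconn ⟨hx, hvx.ne'⟩ ⟨hy, hvy.ne'⟩
  exact ⟨q, hqS, isCycle_cons_concat hvx hvy hxy hq fun h => (hqS v h).2 rfl⟩

lemma inseparableOn.exists_isCycle (hS : inseparableOn G S) (hcard : 3 ≤ S.encard)
    (hv : v ∈ S) : ∃ c : G.Walk v v, c.IsCycle ∧ ∀ z ∈ c.support, z ∈ S := by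
  obtain ⟨x, hx, y, hy, hvx, hvy, hxy⟩ := hS.exists_neighbors hcard hv
  obtain ⟨q, hqS, hc⟩ := exists_isCycle_cons_concat (hS.2 v hv) hx hy hvx hvy hxy
  refine ⟨_, hc, fun z hz => ?_⟩
  rcases (mem_support_cons_concat hvx hvy q).1 hz with rfl | hz'
  · exact hv
  · exact (hqS z hz').1

end Inseparable

section Ears

lemma IsEar.reverse {D : G.Walk x y} (hD : IsEar X D) : IsEar X D.reverse :=
  ⟨hD.isPath.reverse, hD.ne.symm, hD.end_mem, hD.start_mem, fun z hz hzX =>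
    (hD.eq_or_eq z (by simpa using hz) hzX).symm⟩

lemma exists_isEar_of_mem (hS : (G.induce S).Connected) (hXS : X ⊆ S) (hX : X.Nontrivial)
    (hu : u ∈ X) : ∃ (y : V) (D : G.Walk u y), IsEar X D := by
  obtain ⟨t, ht, htu⟩ := hX.exists_ne u
  obtain ⟨y, hy, D, hD, -, hfirst⟩ :=
    exists_path_eq_of_mem hS (hXS hu) (hXS ht) (X := X \ {u}) ⟨ht, htu⟩
  exact ⟨y, D, hD, Ne.symm hy.2, hu, hy.1, fun z hz hzX =>
    or_iff_not_imp_left.2 fun hzu => hfirst z hz ⟨hzX, hzu⟩⟩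

lemma IsEar.exists_reroute_left {D₁ : G.Walk x u} {D₂ : G.Walk u y}
    (hD : IsEar X (D₁.append D₂)) {R : G.Walk w z} (hR : R.IsPath) (huR : u ∉ R.support)
    (hzX : z ∈ X ∪ {t | t ∈ D₁.support}) (hzD₂ : z ∉ D₂.support)
    (hfirst : ∀ t ∈ R.support, t ∈ X ∪ {t | t ∈ (D₁.append D₂).support} → t = z) :
    ∃ x' ∈ X, ∃ P : G.Walk x' w, P.IsPath ∧ (∀ t ∈ P.support, t ∉ D₂.support) ∧
      ∀ t ∈ P.support, t ∈ X → t = x' := by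
  classical
  obtain ⟨hD₁, -, hshare⟩ := (isPath_append_iff D₁ D₂).1 hD.isPath
  have hRD₂ : ∀ t ∈ R.support, t ∉ D₂.support := fun t ht htD₂ =>
    hzD₂ (hfirst t ht (Or.inr (by simp [htD₂])) ▸ htD₂)
  by_cases hzD₁ : z ∈ D₁.support
  · have huz : u ≠ z := fun h => huR (h ▸ R.end_mem_support)
    have hsub := D₁.support_takeUntil_subset_support hzD₁
    have hdisj : ∀ t ∈ ((D₁.takeUntil z hzD₁).append R.reverse).support, t ∉ D₂.support := by
      intro t ht htD₂
      rcases (Walk.mem_support_append_iff _ _).1 ht with ht | ht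
      · obtain rfl := hshare t (hsub ht) htD₂
        exact Walk.endpoint_notMem_support_takeUntil hD₁ hzD₁ huz ht
      · exact hRD₂ t (by simpa using ht) htD₂
    refine ⟨x, hD.start_mem, _, (isPath_append_iff _ _).2 ⟨hD₁.takeUntil hzD₁, hR.reverse, ?_⟩,
      hdisj, fun t ht htX => ?_⟩
    · exact fun t htD₁ htR => hfirst t (by simpa using htR) (Or.inr (by simp [hsub htD₁]))
    · have htD : t ∈ (D₁.append D₂).support := by
        rcases (Walk.mem_support_append_iff _ _).1 ht with ht | ht
        · simp [hsub ht]
        · simp [hfirst t (by simpa using ht) (Or.inl htX), hzD₁]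
      exact (hD.eq_or_eq t htD htX).resolve_right fun h => hdisj t ht (h ▸ D₂.end_mem_support)
  · exact ⟨z, hzX.resolve_right hzD₁, R.reverse, hR.reverse, by simpa using hRD₂,
      fun t ht htX => hfirst t (by simpa using ht) (Or.inl htX)⟩

lemma IsEar.exists_mem_of_adj_of_notMem {D₁ : G.Walk x u} {D₂ : G.Walk u y}
    (hD : IsEar X (D₁.append D₂)) (huw : G.Adj u w) (hux : u ≠ x) {R : G.Walk w z}
    (hR : R.IsPath) (huR : u ∉ R.support) (hzX : z ∈ X ∪ {t | t ∈ D₁.support})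
    (hzD₂ : z ∉ D₂.support)
    (hfirst : ∀ t ∈ R.support, t ∈ X ∪ {t | t ∈ (D₁.append D₂).support} → t = z) :
    ∃ (x' y' : V) (D : G.Walk x' y'), IsEar X D ∧ w ∈ D.support := by
  obtain ⟨-, hD₂, hshare⟩ := (isPath_append_iff D₁ D₂).1 hD.isPath
  obtain ⟨x', hx', P, hP, hPD₂, hPX⟩ := hD.exists_reroute_left hR huR hzX hzD₂ hfirst
  refine ⟨x', y, P.append (.cons huw.symm D₂), ⟨(isPath_append_iff _ _).2 ⟨hP, ?_, ?_⟩, ?_, hx',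
    hD.end_mem, fun t ht htX => ?_⟩, by simp⟩
  · exact hD₂.cons (hPD₂ w P.end_mem_support)
  · intro t htP ht
    exact (List.mem_cons.1 ht).resolve_right (hPD₂ t htP)
  · rintro rfl
    exact hPD₂ x' P.start_mem_support D₂.end_mem_support
  · have ht' : t ∈ P.support ∨ t ∈ D₂.support := by
      rw [Walk.mem_support_append_iff, Walk.support_cons, List.mem_cons] at ht
      rcases ht with ht | rfl | ht
      exacts [.inl ht, .inl P.end_mem_support, .inr ht]
    rcases ht' with htP | htD₂
    · exact .inl (hPX t htP htX)
    · refine .inr ((hD.eq_or_eq t (by simp [htD₂]) htX).resolve_left ?_)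
      rintro rfl
      exact hux (hshare t D₁.start_mem_support htD₂).symm

/- A path from `w` that avoids `u` first meets `X ∪ D` on one side of `u`; walking back along it to
`w`, stepping to `u` and keeping the other side of `D` gives the new ear. -/
lemma IsEar.exists_mem_of_adj (hS : inseparableOn G S) (hXS : X ⊆ S) {D : G.Walk x y}
    (hD : IsEar X D) (hu : u ∈ D.support) (huS : u ∈ S) (hwS : w ∈ S) (huw : G.Adj u w) :
    ∃ (x' y' : V) (D' : G.Walk x' y'), IsEar X D' ∧ w ∈ D'.support := by
  obtain ⟨t, htX, htu⟩ : ∃ t ∈ X, t ≠ u := by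
    by_cases hxu : x = u
    · exact ⟨y, hD.end_mem, hxu ▸ hD.ne.symm⟩
    · exact ⟨x, hD.start_mem, hxu⟩
  obtain ⟨z, hz, R, hR, hRS, hfirst⟩ := exists_path_eq_of_mem (hS.2 u huS) (x := w) (y := t)
    (X := X ∪ {t | t ∈ D.support}) ⟨hwS, huw.ne'⟩ ⟨hXS htX, htu⟩ (.inl htX)
  have huR : u ∉ R.support := fun h => (hRS u h).2 rfl
  have hzu : z ≠ u := fun h => huR (h ▸ R.end_mem_support)
  obtain ⟨D₁, D₂, -, -, rfl⟩ := hD.isPath.mem_support_iff_exists_append.1 hu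
  obtain ⟨hD₁, hD₂, hshare⟩ := (isPath_append_iff D₁ D₂).1 hD.isPath
  by_cases hside : z ∉ D₂.support ∧ u ≠ x
  · exact hD.exists_mem_of_adj_of_notMem huw hside.2 hR huR
      (hz.imp_right fun hzD => ((Walk.mem_support_append_iff _ _).1 hzD).resolve_right hside.1)
      hside.1 hfirst
  · obtain ⟨hzD₁, huy⟩ : z ∉ D₁.support ∧ u ≠ y := by
      by_cases hux : u = x
      · subst hux
        exact ⟨fun hzD₁ => hzu (eq_of_mem_support_of_isPath hD₁ hzD₁), hD.ne⟩
      · have hzD₂ : z ∈ D₂.support := by_contra fun hzD₂ => hside ⟨hzD₂, hux⟩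
        refine ⟨fun hzD₁ => hzu (hshare z hzD₁ hzD₂), ?_⟩
        rintro rfl
        exact hzu (eq_of_mem_support_of_isPath hD₂ hzD₂)
    have hrev : D₂.reverse.append D₁.reverse = (D₁.append D₂).reverse := by simp
    refine IsEar.exists_mem_of_adj_of_notMem (D₁ := D₂.reverse) (D₂ := D₁.reverse)
      (hrev ▸ hD.reverse) huw huy hR huR (hz.imp_right fun hzD => ?_) (by simpa using hzD₁)
      (by simpa [or_comm] using hfirst)
    simpa [hzD₁] using hzD

lemma inseparableOn.exists_isEar (hS : inseparableOn G S) (hXS : X ⊆ S) (hX : X.Nontrivial)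
    (hv : v ∈ S) : ∃ (x y : V) (D : G.Walk x y), IsEar X D ∧ v ∈ D.support := by
  obtain ⟨u, hu⟩ := hX.nonempty
  obtain ⟨p, -, hpS⟩ := exists_path_of_connected_induce hS.1 hv (hXS hu)
  induction p with
  | nil =>
    obtain ⟨y, D, hD⟩ := exists_isEar_of_mem hS.1 hXS hX hu
    exact ⟨_, y, D, hD, D.start_mem_support⟩
  | cons hvw p ih =>
    have hw := hpS _ (List.mem_cons_of_mem _ p.start_mem_support)
    obtain ⟨x, y, D, hD, hwD⟩ := ih hw hu fun z hz => hpS z (List.mem_cons_of_mem _ hz)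
    exact hD.exists_mem_of_adj hS hXS hwD hw hv hvw.symm

end Ears

section Balance

lemma balancedOn.sign_mul_walkSign_eq_one (hT : balancedOn G σ T) (h : G.Adj x y)
    {p : G.Walk y x} (hp : p.IsPath) (hpT : ∀ z ∈ p.support, z ∈ T) :
    σ s(x, y) * walkSign G σ p = 1 := by
  by_cases he : s(x, y) ∈ p.edges
  · rw [hp.eq_adj_toWalk_of_mem_edges (by rwa [Sym2.eq_swap]), Adj.toWalk, walkSign_cons,
      walkSign_nil, Sym2.eq_swap, mul_one, Int.units_mul_self]
  · rw [← walkSign_cons h]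
    refine hT _ ((Walk.cons_isCycle_iff _ h).2 ⟨hp, he⟩) fun z hz => ?_
    rcases List.mem_cons.1 hz with rfl | hz
    exacts [hpT z p.end_mem_support, hpT z hz]

lemma balancedOn.walkSign_bypass [DecidableEq V] (hT : balancedOn G σ T) (p : G.Walk x y)
    (hp : ∀ z ∈ p.support, z ∈ T) : walkSign G σ p.bypass = walkSign G σ p := by
  induction p with
  | nil => rfl
  | @cons x w y h p ih =>
    have hpT : ∀ z ∈ p.support, z ∈ T := fun z hz => hp z (List.mem_cons_of_mem _ hz)
    rw [walkSign_cons, ← ih hpT, Walk.bypass]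
    split_ifs with hx
    · have hclosed := hT.sign_mul_walkSign_eq_one h (p.bypass_isPath.takeUntil hx) fun z hz =>
        hpT z (p.support_bypass_subset_support (p.bypass.support_takeUntil_subset_support hx hz))
      conv_rhs => rw [← p.bypass.take_spec hx, walkSign_append, ← mul_assoc, hclosed, one_mul]
    · rw [walkSign_cons]

lemma balancedOn.walkSign_eq_one (hT : balancedOn G σ T) (p : G.Walk x x)
    (hp : ∀ z ∈ p.support, z ∈ T) : walkSign G σ p = 1 := by
  classical
  rw [← hT.walkSign_bypass p hp,
    Walk.eq_nil_iff_nil.2 (Walk.isPath_iff_nil.1 p.bypass_isPath), walkSign_nil]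

lemma balancedOn.walkSign_eq (hT : balancedOn G σ T) (p q : G.Walk x y)
    (hp : ∀ z ∈ p.support, z ∈ T) (hq : ∀ z ∈ q.support, z ∈ T) :
    walkSign G σ p = walkSign G σ q := by
  have hclosed : walkSign G σ (p.append q.reverse) = 1 := by
    refine hT.walkSign_eq_one _ fun z hz => ?_
    rcases (Walk.mem_support_append_iff _ _).1 hz with hz | hz
    exacts [hp z hz, hq z (by simpa using hz)]
  rwa [walkSign_append, walkSign_reverse, mul_eq_one_iff_eq_inv, Int.units_inv_eq_self] at hclosed

lemma balancedOn.exists_potential (hT : balancedOn G σ T) (hconn : (G.induce T).Connected) :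
    ∃ θ : V → ℤˣ, ∀ ⦃a b : V⦄ (p : G.Walk a b), (∀ z ∈ p.support, z ∈ T) →
      walkSign G σ p = θ a * θ b := by
  obtain ⟨t, ht⟩ := hconn.nonempty
  have hsign : ∀ a, ∃ s : ℤˣ, ∀ p : G.Walk t a, (∀ z ∈ p.support, z ∈ T) →
      walkSign G σ p = s := by
    intro a
    by_cases h : ∃ p : G.Walk t a, ∀ z ∈ p.support, z ∈ T
    · obtain ⟨q, hq⟩ := h
      exact ⟨_, fun p hp => hT.walkSign_eq p q hp hq⟩
    · exact ⟨1, fun p hp => absurd ⟨p, hp⟩ h⟩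
  choose θ hθ using hsign
  refine ⟨θ, fun a b p hp => ?_⟩
  obtain ⟨q, -, hq⟩ := exists_path_of_connected_induce hconn ht (hp a p.start_mem_support)
  have hqp : ∀ z ∈ (q.append p).support, z ∈ T := fun z hz =>
    ((Walk.mem_support_append_iff _ _).1 hz).elim (hq z) (hp z)
  rw [← hθ b _ hqp, walkSign_append, hθ a q hq, ← mul_assoc, Int.units_mul_self, one_mul]

lemma exists_isCycle_of_not_balancedOn (hS : ¬ balancedOn G σ S) :
    ∃ (a : V) (c : G.Walk a a), c.IsCycle ∧ (∀ z ∈ c.support, z ∈ S) ∧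
      walkSign G σ c = -1 := by
  simp only [balancedOn, not_forall] at hS
  obtain ⟨a, c, hc, hcS, hne⟩ := hS
  exact ⟨a, c, hc, hcS, (Int.units_eq_one_or _).resolve_left hne⟩

end Balance

section BalancingVertex

lemma IsBalancingVertex.balancedOn_sdiff (hv : IsBalancingVertex G σ S v) :
    balancedOn G σ (S \ {v}) := fun _ c hc hcS =>
  (Int.units_eq_one_or _).resolve_right fun hneg =>
    (hcS v (hv c hc (fun z hz => (hcS z hz).1) hneg)).2 rfl

lemma IsBalancingVertex.exists_walkSign_eq (hv : IsBalancingVertex G σ S v)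
    (hconn : (G.induce (S \ {v})).Connected) :
    ∃ f : V → ℤˣ, ∀ ⦃x y : V⦄ (hx : G.Adj v x) (hy : G.Adj v y) (q : G.Walk x y),
      (∀ z ∈ q.support, z ∈ S \ {v}) →
        walkSign G σ (.cons hx (q.concat hy.symm)) = f x * f y := by
  obtain ⟨θ, hθ⟩ := hv.balancedOn_sdiff.exists_potential hconn
  refine ⟨fun x => σ s(v, x) * θ x, fun x y hx hy q hq => ?_⟩
  rw [walkSign_cons_concat hx hy, hθ q hq, ← mul_assoc, mul_assoc, mul_comm (θ y)]

lemma IsBalancingVertex.balancedOn_of_encard_eq_two (hv : IsBalancingVertex G σ S v)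
    (hconn : (G.induce (S \ {v})).Connected) (hdeg : {u | u ∈ S ∧ G.Adj v u}.encard = 2)
    {c : G.Walk u u} (hc : c.IsCycle) (hcS : ∀ z ∈ c.support, z ∈ S) (hvc : v ∈ c.support)
    (hpos : walkSign G σ c = 1) : balancedOn G σ S := by
  obtain ⟨f, hf⟩ := hv.exists_walkSign_eq hconn
  obtain ⟨a, b, -, hab⟩ := Set.encard_eq_two.1 hdeg
  have walkSign_eq : ∀ ⦃t : V⦄ (w : G.Walk t t), w.IsCycle → (∀ z ∈ w.support, z ∈ S) →
      v ∈ w.support → walkSign G σ w = f a * f b := by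
    intro t w hw hwS hvw
    obtain ⟨x, y, hx, hy, q, hxy, hvq, hsupp, hsign⟩ := exists_neighbors_of_isCycle hw hvw
    have hqS : ∀ z ∈ q.support, z ∈ S := fun z hz => hwS z ((hsupp z).2 (.inr hz))
    rw [hsign, hf hx hy q fun z hz => ⟨hqS z hz, fun h => hvq (h ▸ hz)⟩]
    have mem_pair : ∀ z ∈ q.support, G.Adj v z → z = a ∨ z = b := fun z hz hvz =>
      hab.subset ⟨hqS z hz, hvz⟩
    rcases mem_pair x q.start_mem_support hx with rfl | rfl <;>
      rcases mem_pair y q.end_mem_support hy with rfl | rfl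
    exacts [absurd rfl hxy, rfl, mul_comm _ _, absurd rfl hxy]
  intro t w hw hwS
  refine (Int.units_eq_one_or _).resolve_right fun hneg => ?_
  have hpos' : walkSign G σ w = 1 := by
    rw [walkSign_eq w hw hwS (hv w hw hwS hneg), ← walkSign_eq c hc hcS hvc, hpos]
  exact absurd (hpos'.symm.trans hneg) (by decide)

lemma exists_third_neighbor_of_isCycle {c : G.Walk u u} (hc : c.IsCycle)
    (hcS : ∀ z ∈ c.support, z ∈ S) (hv : v ∈ c.support)
    (hdeg : {u | u ∈ S ∧ G.Adj v u}.encard ≠ 2) :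
    ∃ x y z, x ≠ y ∧ x ≠ z ∧ y ≠ z ∧ ∀ t ∈ ({x, y, z} : Set V), t ∈ S ∧ G.Adj v t := by
  obtain ⟨x, y, hx, hy, q, hxy, -, hsupp, -⟩ := exists_neighbors_of_isCycle hc hv
  have hxS : x ∈ S := hcS x ((hsupp x).2 (.inr q.start_mem_support))
  have hyS : y ∈ S := hcS y ((hsupp y).2 (.inr q.end_mem_support))
  have hpair : {x, y} ⊂ {u | u ∈ S ∧ G.Adj v u} :=
    ssubset_of_subset_of_ne (Set.pair_subset ⟨hxS, hx⟩ ⟨hyS, hy⟩) fun h =>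
      hdeg (h ▸ Set.encard_pair hxy)
  obtain ⟨z, hz, hzxy⟩ := Set.exists_of_ssubset hpair
  simp only [Set.mem_insert_iff, Set.mem_singleton_iff, not_or] at hzxy
  exact ⟨x, y, z, hxy, Ne.symm hzxy.1, Ne.symm hzxy.2, by
    rintro t (rfl | rfl | rfl)
    exacts [⟨hxS, hx⟩, ⟨hyS, hy⟩, hz]⟩

lemma IsBalancingVertex.memPositiveCircle_of_encard_ne_two (hv : IsBalancingVertex G σ S v)
    (hconn : (G.induce (S \ {v})).Connected) (hS : ¬ balancedOn G σ S)
    (hdeg : {u | u ∈ S ∧ G.Adj v u}.encard ≠ 2) : MemPositiveCircle G σ v := by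
  obtain ⟨a, c, hc, hcS, hneg⟩ := exists_isCycle_of_not_balancedOn hS
  obtain ⟨x, y, z, hxy, hxz, hyz, hadj⟩ :=
    exists_third_neighbor_of_isCycle hc hcS (hv c hc hcS hneg) hdeg
  obtain ⟨f, hf⟩ := hv.exists_walkSign_eq hconn
  have of_eq : ∀ s ∈ ({x, y, z} : Set V), ∀ t ∈ ({x, y, z} : Set V), s ≠ t → f s = f t →
      MemPositiveCircle G σ v := by
    intro s hs t ht hst hfst
    obtain ⟨hsS, hvs⟩ := hadj s hs
    obtain ⟨htS, hvt⟩ := hadj t ht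
    obtain ⟨q, hqS, hc⟩ := exists_isCycle_cons_concat hconn hsS htS hvs hvt hst
    exact ⟨v, _, hc, Walk.start_mem_support _, by rw [hf hvs hvt q hqS, hfst, Int.units_mul_self]⟩
  have pigeonhole : ∀ a b c : ℤˣ, a = b ∨ a = c ∨ b = c := by decide
  rcases pigeonhole (f x) (f y) (f z) with h | h | h
  · exact of_eq x (by simp) y (by simp) hxy h
  · exact of_eq x (by simp) z (by simp) hxz h
  · exact of_eq y (by simp) z (by simp) hyz h

end BalancingVertex

section Theta

lemma IsEar.memPositiveCircle {c : G.Walk u u} (hc : c.IsCycle) (hneg : walkSign G σ c = -1)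
    {D : G.Walk x y} (hD : IsEar {z | z ∈ c.support} D) (hvD : v ∈ D.support)
    (hvc : v ∉ c.support) : MemPositiveCircle G σ v := by
  obtain ⟨A, B, hA, hB, hAc, hBc, hAB⟩ := exists_arcs_of_isCycle hc hD.start_mem hD.end_mem hD.ne
  have hlen : 1 < D.length := one_lt_length_of_mem_support hvD
    (fun h => hvc (h ▸ hD.start_mem)) fun h => hvc (h ▸ hD.end_mem)
  have of_eq : ∀ A : G.Walk x y, A.IsPath → (∀ z ∈ A.support, z ∈ c.support) →
      walkSign G σ A = walkSign G σ D → MemPositiveCircle G σ v := fun A hA hAc hAD =>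
    ⟨x, A.append D.reverse, isCycle_append_reverse hA hD.isPath
      (fun z hzA hzD => hD.eq_or_eq z hzD (hAc z hzA)) hlen, by simp [hvD],
      by rw [walkSign_append, walkSign_reverse, hAD, Int.units_mul_self]⟩
  have eq_or_eq : ∀ a b d : ℤˣ, a * b = -1 → a = d ∨ b = d := by decide
  exact (eq_or_eq _ _ _ ((hAB σ).trans hneg)).elim (of_eq A hA hAc) (of_eq B hB hBc)

lemma inseparableOn.memPositiveCircle_of_not_isBalancingVertex (hS : inseparableOn G S)
    (hv : v ∈ S) (hbal : ¬ IsBalancingVertex G σ S v) : MemPositiveCircle G σ v := by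
  simp only [IsBalancingVertex, not_forall] at hbal
  obtain ⟨a, c, hc, hcS, hneg, hvc⟩ := hbal
  obtain ⟨x, y, hx, -, q, -, -, hsupp, -⟩ := exists_neighbors_of_isCycle hc c.start_mem_support
  have hnontrivial : {z | z ∈ c.support}.Nontrivial :=
    ⟨a, c.start_mem_support, x, (hsupp x).2 (.inr q.start_mem_support), hx.ne⟩
  obtain ⟨x, y, D, hD, hvD⟩ := hS.exists_isEar hcS hnontrivial hv
  exact hD.memPositiveCircle hc hneg hvD hvc

end Theta

end

/-- Extended cardinalities, since `Set.ncard` of an infinite set is the junk value `0`. -/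
theorem vertex_in_positive_circle_iff_general {V : Type*} (G : SimpleGraph V)
    (σ : Sym2 V → ℤˣ) (v : V) :
    MemPositiveCircle G σ v ↔
      ∃ S : Set V, isBlock G S ∧ v ∈ S ∧
        ((balancedOn G σ S ∧ 3 ≤ S.encard) ∨
          (¬ balancedOn G σ S ∧
            ¬ (IsBalancingVertex G σ S v ∧ {u | u ∈ S ∧ G.Adj v u}.encard = 2))) := by
  constructor
  · rintro ⟨a, c, hc, hvc, hpos⟩
    obtain ⟨S, hS, hcS⟩ := (inseparableOn_support_of_isCycle hc).exists_isBlock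
    refine ⟨S, hS, hcS hvc, ?_⟩
    by_cases hbal : balancedOn G σ S
    · exact .inl ⟨hbal, three_le_encard_of_isCycle hc hcS⟩
    · exact .inr ⟨hbal, fun ⟨hv, hdeg⟩ => hbal <|
        hv.balancedOn_of_encard_eq_two (hS.1.2 v (hcS hvc)) hdeg hc hcS hvc hpos⟩
  · rintro ⟨S, ⟨hS, -⟩, hvS, ⟨hbal, hcard⟩ | ⟨hunbal, hdeg⟩⟩
    · obtain ⟨c, hc, hcS⟩ := hS.exists_isCycle hcard hvS
      exact ⟨v, c, hc, c.start_mem_support, hbal c hc hcS⟩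
    · by_cases hv : IsBalancingVertex G σ S v
      · exact hv.memPositiveCircle_of_encard_ne_two (hS.2 v hvS) hunbal fun h => hdeg ⟨hv, h⟩
      · exact hS.memPositiveCircle_of_not_isBalancingVertex hvS hv

/-- A vertex `v` of a signed graph lies in a positive circle iff either `v` belongs to a
balanced block that is not `K₁` or `K₂` (i.e. has at least 3 vertices), or `v` belongs to
an unbalanced block in which `v` is not a balancing vertex of degree 2. -/
theorem vertex_in_positive_circle_iff {V : Type*} [Fintype V]
    (G : SimpleGraph V) (σ : Sym2 V → ℤˣ) (v : V) :
    (∃ (a : V) (w : G.Walk a a), w.IsCycle ∧ v ∈ w.support ∧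
        walkSign G σ w = 1) ↔
      ∃ S : Set V, isBlock G S ∧ v ∈ S ∧
        ((balancedOn G σ S ∧ 3 ≤ S.ncard) ∨
          (¬ balancedOn G σ S ∧
            ¬ ((∀ ⦃a : V⦄ (w : G.Walk a a), w.IsCycle → (∀ x ∈ w.support, x ∈ S) →
                  walkSign G σ w = -1 → v ∈ w.support) ∧
               {u | u ∈ S ∧ G.Adj v u}.ncard = 2))) := by
  have cast_ncard : ∀ T : Set V, (T.ncard : ℕ∞) = T.encard := fun T => T.toFinite.cast_ncard_eq
  have general := vertex_in_positive_circle_iff_general G σ v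
  simp only [← cast_ncard] at general
  exact_mod_cast general
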